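/- arXiv:2308.12959 — 2 statements merged into one kernel-verified Lean document; each statement's English description precedes it below -/
import Mathlib

section
/- One-shot chain-rule-type bound for the smoothed max-relative entropy under channels: Let E, F : M_d(ℂ) → M_{d'}(ℂ) be quantum channels, let ρ, σ be states on ℂ^d, and let ε, ε' ∈ (0,1) with ε + ε' < 1, μ > 0 and m ≥ 1. Then there exists a state ν ∈ B^ε(ρ) such that D_max^{ε+ε'}((E(ρ))^{⊗m} ‖ (F(σ))^{⊗m}) ≤ D_max^{ε'}((E(ν))^{⊗m} ‖ (F(ν))^{⊗m}) + m · D_max^{ε/m}(ρ‖σ) + μ in the extended reals. -/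
open scoped Kronecker ComplexOrder

noncomputable section

namespace QCD

attribute [local instance] Classical.propDecidable

variable {n m : Type} [Fintype n] [DecidableEq n] [Fintype m] [DecidableEq m]

/-- The real part of the trace of a complex matrix. -/
def rtr (A : Matrix n n ℂ) : ℝ := (A.trace).re

/-- A quantum state: positive semidefinite with trace one. -/
def IsState (ρ : Matrix n n ℂ) : Prop := ρ.PosSemidef ∧ ρ.trace = 1

/-- Loewner order: `A ≤ B` iff `B - A` is positive semidefinite. -/
def loewnerLE (A B : Matrix n n ℂ) : Prop := (B - A).PosSemidef

/-- Support containment (for PSD matrices): `ker σ ⊆ ker ρ`. -/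
def SuppLE (ρ σ : Matrix n n ℂ) : Prop := ∀ v : n → ℂ, σ.mulVec v = 0 → ρ.mulVec v = 0

/-- Functional calculus for Hermitian matrices (junk value `0` otherwise). -/
def matFun (f : ℝ → ℝ) (A : Matrix n n ℂ) : Matrix n n ℂ :=
  if hA : A.IsHermitian then
    (hA.eigenvectorUnitary : Matrix n n ℂ) *
      Matrix.diagonal (fun i => (f (hA.eigenvalues i) : ℂ)) *
      (star (hA.eigenvectorUnitary : Matrix n n ℂ))
  else 0

/-- Matrix square root via functional calculus. -/
def msqrt (A : Matrix n n ℂ) : Matrix n n ℂ := matFun Real.sqrt A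

/-- Matrix real power taken on the support (`0 ^ t := 0`). -/
def mpow (A : Matrix n n ℂ) (t : ℝ) : Matrix n n ℂ :=
  matFun (fun x => if x = 0 then 0 else x ^ t) A

/-- Matrix base-2 logarithm on the support. -/
def mlog (A : Matrix n n ℂ) : Matrix n n ℂ := matFun (Real.logb 2) A

/-- Positive part of a Hermitian matrix. -/
def mposPart (A : Matrix n n ℂ) : Matrix n n ℂ := matFun (fun x => max x 0) A

/-- Trace norm. -/
def traceNorm (A : Matrix n m ℂ) : ℝ := rtr (msqrt (A.conjTranspose * A))

/-- Base-2 logarithm as an extended real (`⊥` on nonpositive input). -/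
def elog (x : ℝ) : EReal := if x ≤ 0 then ⊥ else ((Real.logb 2 x : ℝ) : EReal)

/-- Base-2 logarithm of an extended real. -/
def elogE (x : EReal) : EReal := if x = ⊤ then ⊤ else elog x.toReal

/-- `2 ^ x` for an extended real `x`. -/
def epow2 (x : EReal) : EReal :=
  if x = ⊤ then ⊤ else if x = ⊥ then 0 else ((((2:ℝ) ^ x.toReal : ℝ)) : EReal)

/-- Umegaki relative entropy (base 2), `⊤` if the support condition fails. -/
def relEntropy (ρ σ : Matrix n n ℂ) : EReal :=
  if SuppLE ρ σ then ((rtr (ρ * (mlog ρ - mlog σ)) : ℝ) : EReal) else ⊤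

/-- Petz–Rényi divergence (base 2). -/
def petzRenyi (α : ℝ) (ρ σ : Matrix n n ℂ) : EReal :=
  if 1 < α ∧ ¬ SuppLE ρ σ then ⊤
  else (((α - 1)⁻¹ : ℝ) : EReal) * elog (rtr (mpow ρ α * mpow σ (1 - α)))

/-- Geometric (maximal) Rényi divergence (base 2). -/
def geomRenyi (α : ℝ) (ρ σ : Matrix n n ℂ) : EReal :=
  if SuppLE ρ σ then
    (((α - 1)⁻¹ : ℝ) : EReal) *
      elog (rtr (σ * mpow (mpow σ (-(1/2 : ℝ)) * ρ * mpow σ (-(1/2 : ℝ))) α))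
  else ⊤

/-- Max-relative entropy (base 2). -/
def dMax (ρ σ : Matrix n n ℂ) : EReal :=
  sInf {x : EReal | ∃ lam : ℝ, x = (lam : EReal) ∧ loewnerLE ρ ((((2:ℝ) ^ lam : ℝ) : ℂ) • σ)}

/-- Uhlmann fidelity. -/
def fidelity (ρ σ : Matrix n n ℂ) : ℝ := (rtr (msqrt (msqrt σ * ρ * msqrt σ))) ^ 2

/-- Sine (purified) distance. -/
def sineDist (ρ σ : Matrix n n ℂ) : ℝ := Real.sqrt (1 - fidelity ρ σ)

/-- Smoothed max-relative entropy: smoothing over states in the sine-distance ball. -/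
def dMaxSmooth (δ : ℝ) (ρ σ : Matrix n n ℂ) : EReal :=
  ⨅ (ρ' : Matrix n n ℂ) (_ : IsState ρ' ∧ sineDist ρ ρ' ≤ δ), dMax ρ' σ

/-- Hypothesis testing divergence (base 2). -/
def dH (ε : ℝ) (ρ σ : Matrix n n ℂ) : EReal :=
  - elog (sInf {x : ℝ | ∃ T : Matrix n n ℂ,
      T.PosSemidef ∧ ((1 : Matrix n n ℂ) - T).PosSemidef ∧ 1 - ε ≤ rtr (T * ρ) ∧ x = rtr (T * σ)})

/-- The quantity `c_γ(ρ‖σ)`. -/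
def cGamma (γ : ℝ) (ρ σ : Matrix n n ℂ) : EReal :=
  ((γ⁻¹ : ℝ) : EReal) *
    elogE (epow2 ((γ : ℝ) * petzRenyi (1 + γ) ρ σ) +
           epow2 (((-γ : ℝ) : EReal) * petzRenyi (1 - γ) ρ σ) + 1)

/-- Binary entropy (base 2). -/
def binEnt (x : ℝ) : ℝ := -(x * Real.logb 2 x) - (1 - x) * Real.logb 2 (1 - x)

/-- Action of `id_k ⊗ Φ` on block matrices. -/
def blockApply {k : Type} (Φ : Matrix n n ℂ →ₗ[ℂ] Matrix m m ℂ)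
    (M : Matrix (k × n) (k × n) ℂ) : Matrix (k × m) (k × m) ℂ :=
  Matrix.of fun p q => Φ (Matrix.of fun a b => M (p.1, a) (q.1, b)) p.2 q.2

/-- Action of `Φ ⊗ id_k` on block matrices. -/
def blockApplyRight {k : Type} (Φ : Matrix n n ℂ →ₗ[ℂ] Matrix m m ℂ)
    (M : Matrix (n × k) (n × k) ℂ) : Matrix (m × k) (m × k) ℂ :=
  Matrix.of fun p q => Φ (Matrix.of fun a b => M (a, p.2) (b, q.2)) p.1 q.1

/-- Quantum channel: trace preserving and completely positive. -/
def IsQChannel (Φ : Matrix n n ℂ →ₗ[ℂ] Matrix m m ℂ) : Prop :=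
  (∀ M : Matrix n n ℂ, (Φ M).trace = M.trace) ∧
  (∀ k : ℕ, 1 ≤ k → ∀ M : Matrix (Fin k × n) (Fin k × n) ℂ, M.PosSemidef →
    (blockApply Φ M).PosSemidef)

/-- `id_k ⊗ Φ` as a linear map. -/
def blockApplyL (k : Type) (Φ : Matrix n n ℂ →ₗ[ℂ] Matrix m m ℂ) :
    Matrix (k × n) (k × n) ℂ →ₗ[ℂ] Matrix (k × m) (k × m) ℂ where
  toFun := blockApply Φ
  map_add' M N := by
    ext p q
    show Φ (Matrix.of fun a b => (M + N) (p.1, a) (q.1, b)) p.2 q.2 = _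
    have h : (Matrix.of fun a b => (M + N) (p.1, a) (q.1, b)) =
        (Matrix.of fun a b => M (p.1, a) (q.1, b)) +
          (Matrix.of fun a b => N (p.1, a) (q.1, b)) := rfl
    rw [h, map_add]
    rfl
  map_smul' c M := by
    ext p q
    show Φ (Matrix.of fun a b => (c • M) (p.1, a) (q.1, b)) p.2 q.2 = _
    have h : (Matrix.of fun a b => (c • M) (p.1, a) (q.1, b)) =
        c • (Matrix.of fun a b => M (p.1, a) (q.1, b)) := rfl
    rw [h, map_smul]
    rfl

/-- `Φ ⊗ id_k` as a linear map. -/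
def blockApplyRightL (k : Type) (Φ : Matrix n n ℂ →ₗ[ℂ] Matrix m m ℂ) :
    Matrix (n × k) (n × k) ℂ →ₗ[ℂ] Matrix (m × k) (m × k) ℂ where
  toFun := blockApplyRight Φ
  map_add' M N := by
    ext p q
    show Φ (Matrix.of fun a b => (M + N) (a, p.2) (b, q.2)) p.1 q.1 = _
    have h : (Matrix.of fun a b => (M + N) (a, p.2) (b, q.2)) =
        (Matrix.of fun a b => M (a, p.2) (b, q.2)) +
          (Matrix.of fun a b => N (a, p.2) (b, q.2)) := rfl
    rw [h, map_add]
    rfl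
  map_smul' c M := by
    ext p q
    show Φ (Matrix.of fun a b => (c • M) (a, p.2) (b, q.2)) p.1 q.1 = _
    have h : (Matrix.of fun a b => (c • M) (a, p.2) (b, q.2)) =
        c • (Matrix.of fun a b => M (a, p.2) (b, q.2)) := rfl
    rw [h, map_smul]
    rfl

/-- Tensor product of two channels (Kronecker product action). -/
def tensorChannel {n₁ m₁ n₂ m₂ : Type}
    (E₁ : Matrix n₁ n₁ ℂ →ₗ[ℂ] Matrix m₁ m₁ ℂ) (E₂ : Matrix n₂ n₂ ℂ →ₗ[ℂ] Matrix m₂ m₂ ℂ) :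
    Matrix (n₁ × n₂) (n₁ × n₂) ℂ →ₗ[ℂ] Matrix (m₁ × m₂) (m₁ × m₂) ℂ :=
  (blockApplyRightL m₂ E₁).comp (blockApplyL n₁ E₂)

/-- Index type for `k`-fold tensor powers. -/
def tpow (ι : Type) : ℕ → Type
  | 0 => PUnit
  | (k+1) => tpow ι k × ι

def tpowFintype (ι : Type) [Fintype ι] : ∀ k : ℕ, Fintype (tpow ι k)
  | 0 => inferInstanceAs (Fintype PUnit)
  | (k+1) => letI := tpowFintype ι k; inferInstanceAs (Fintype (tpow ι k × ι))

instance (ι : Type) [Fintype ι] (k : ℕ) : Fintype (tpow ι k) := tpowFintype ι k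

def tpowDecEq (ι : Type) [DecidableEq ι] : ∀ k : ℕ, DecidableEq (tpow ι k)
  | 0 => inferInstanceAs (DecidableEq PUnit)
  | (k+1) => letI := tpowDecEq ι k; inferInstanceAs (DecidableEq (tpow ι k × ι))

instance (ι : Type) [DecidableEq ι] (k : ℕ) : DecidableEq (tpow ι k) := tpowDecEq ι k

/-- `k`-fold Kronecker tensor power of a matrix. -/
def tpowMat (ρ : Matrix n n ℂ) : ∀ k : ℕ, Matrix (tpow n k) (tpow n k) ℂ
  | 0 => 1
  | (k+1) => (tpowMat ρ k) ⊗ₖ ρ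

/-- `k`-fold tensor power of a channel. -/
def tpowChannel (Φ : Matrix n n ℂ →ₗ[ℂ] Matrix m m ℂ) :
    ∀ k : ℕ, Matrix (tpow n k) (tpow n k) ℂ →ₗ[ℂ] Matrix (tpow m k) (tpow m k) ℂ
  | 0 => LinearMap.id
  | (k+1) => tensorChannel (tpowChannel Φ k) Φ

/-- Channel divergence induced by a divergence `𝔇` on states:
sup over `k ≥ 1` and input states `ν` on `ℂ^k ⊗ ℂ^d`. -/
def chDiv (𝔇 : ∀ (p : Type) [Fintype p] [DecidableEq p], Matrix p p ℂ → Matrix p p ℂ → EReal)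
    (E F : Matrix n n ℂ →ₗ[ℂ] Matrix m m ℂ) : EReal :=
  ⨆ (k : ℕ) (_ : 1 ≤ k) (ν : Matrix (Fin k × n) (Fin k × n) ℂ) (_ : IsState ν),
    𝔇 (Fin k × m) (blockApply E ν) (blockApply F ν)

/-- The geometric Rényi divergence as a divergence family. -/
def geomD (α : ℝ) : ∀ (p : Type) [Fintype p] [DecidableEq p],
    Matrix p p ℂ → Matrix p p ℂ → EReal :=
  fun _ _ _ => geomRenyi α

/-- The Umegaki relative entropy as a divergence family. -/
def relD : ∀ (p : Type) [Fintype p] [DecidableEq p],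
    Matrix p p ℂ → Matrix p p ℂ → EReal :=
  fun _ _ _ => relEntropy

/-- The hypothesis testing divergence as a divergence family. -/
def dHD (ε : ℝ) : ∀ (p : Type) [Fintype p] [DecidableEq p],
    Matrix p p ℂ → Matrix p p ℂ → EReal :=
  fun _ _ _ => dH ε

/-- Regularized channel relative entropy. -/
def regRelEntropy (E F : Matrix n n ℂ →ₗ[ℂ] Matrix m m ℂ) : EReal :=
  ⨆ (k : ℕ) (_ : 1 ≤ k),
    (((k : ℝ)⁻¹ : ℝ) : EReal) * chDiv relD (tpowChannel E k) (tpowChannel F k)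

end QCD

namespace QCD

/-!
A near-minimizer `ν` of `D_max^{ε/m}(ρ‖σ)` satisfies `ν ≤ 2^λ σ`. Positivity of `F` and monotonicity
of Kronecker powers give `F(ν)^{⊗m} ≤ 2^{mλ} F(σ)^{⊗m}`, which costs `m λ` in the second argument of
`D_max`. The sine distance decreases under channels and is subadditive on tensor products, so
`E(ν)^{⊗m}` lies within `m * (ε/m) = ε` of `E(ρ)^{⊗m}`, and by the triangle inequality the smoothing
ball of radius `ε'` around the former is contained in that of radius `ε + ε'` around the latter. The
slack `μ` pays for using a near-minimizer.

The three properties of the sine distance all follow from Uhlmann's theorem, that `√F(ρ, σ)` is the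
maximal overlap of purifications of `ρ` and `σ`.
-/

open Matrix
open scoped MatrixOrder

section RealTrace

variable {n k : Type} [Fintype n] [Fintype k]

lemma rtr_sub (A B : Matrix n n ℂ) : rtr (A - B) = rtr A - rtr B := by
  simp only [rtr, trace_sub, Complex.sub_re]

lemma rtr_ofReal_smul (r : ℝ) (A : Matrix n n ℂ) : rtr ((r : ℂ) • A) = r * rtr A := by
  simp only [rtr, trace_smul, smul_eq_mul, Complex.re_ofReal_mul]

lemma rtr_conjTranspose (A : Matrix n n ℂ) : rtr Aᴴ = rtr A := by
  simp only [rtr, trace_conjTranspose, Complex.star_def, Complex.conj_re]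

lemma rtr_mul_comm (A : Matrix n k ℂ) (B : Matrix k n ℂ) : rtr (A * B) = rtr (B * A) :=
  congrArg Complex.re (trace_mul_comm A B)

lemma rtr_nonneg {A : Matrix n n ℂ} (hA : A.PosSemidef) : 0 ≤ rtr A :=
  (Complex.nonneg_iff.1 hA.trace_nonneg).1

lemma ofReal_rtr {A : Matrix n n ℂ} (hA : A.PosSemidef) : (rtr A : ℂ) = A.trace :=
  (Complex.eq_re_of_ofReal_le hA.trace_nonneg).symm

lemma rtr_mono {A B : Matrix n n ℂ} (h : A ≤ B) : rtr A ≤ rtr B :=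
  sub_nonneg.1 (rtr_sub B A ▸ rtr_nonneg h)

lemma IsState.rtr_eq_one {ρ : Matrix n n ℂ} (hρ : IsState ρ) : rtr ρ = 1 := by
  rw [rtr, hρ.2, Complex.one_re]

lemma IsState.kronecker {ρ : Matrix n n ℂ} {σ : Matrix k k ℂ} (hρ : IsState ρ)
    (hσ : IsState σ) : IsState (ρ ⊗ₖ σ) :=
  ⟨hρ.1.kronecker hσ.1, by rw [trace_kronecker, hρ.2, hσ.2, one_mul]⟩

end RealTrace

section SquareRoot

variable {n : Type} [Fintype n] [DecidableEq n]

lemma matFun_eq_cfc (f : ℝ → ℝ) {A : Matrix n n ℂ} (hA : A.IsHermitian) :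
    matFun f A = cfc f A := by
  rw [matFun, dif_pos hA, hA.cfc_eq]
  rfl

lemma continuousOn_spectrum (f : ℝ → ℝ) (A : Matrix n n ℂ) : ContinuousOn f (spectrum ℝ A) :=
  A.finite_real_spectrum.continuousOn f

lemma cfc_mul_cfc (f g : ℝ → ℝ) (A : Matrix n n ℂ) :
    cfc f A * cfc g A = cfc (fun x => f x * g x) A :=
  (cfc_mul f g A (continuousOn_spectrum f A) (continuousOn_spectrum g A)).symm

lemma msqrt_eq_cfc {A : Matrix n n ℂ} (hA : A.PosSemidef) : msqrt A = cfc Real.sqrt A :=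
  matFun_eq_cfc _ hA.1

lemma msqrt_posSemidef {A : Matrix n n ℂ} (hA : A.PosSemidef) : (msqrt A).PosSemidef := by
  rw [msqrt_eq_cfc hA]
  exact (cfc_nonneg fun x _ => Real.sqrt_nonneg x).posSemidef

lemma conjTranspose_msqrt {A : Matrix n n ℂ} (hA : A.PosSemidef) : (msqrt A)ᴴ = msqrt A :=
  (msqrt_posSemidef hA).1

lemma cfc_mul_self_eq {f g : ℝ → ℝ} {A : Matrix n n ℂ} (hA : A.PosSemidef)
    (h : ∀ x, 0 ≤ x → f x * x = g x) : cfc f A * A = cfc g A :=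
  calc cfc f A * A = cfc f A * cfc (fun x => x) A := by rw [cfc_id' ℝ A hA.1.isSelfAdjoint]
    _ = cfc (fun x => f x * x) A := cfc_mul_cfc f _ A
    _ = cfc g A := cfc_congr fun x hx => h x (spectrum_nonneg_of_nonneg hA.nonneg hx)

lemma msqrt_mul_self {A : Matrix n n ℂ} (hA : A.PosSemidef) : msqrt A * msqrt A = A := by
  rw [msqrt_eq_cfc hA, cfc_mul_cfc]
  conv_rhs => rw [← cfc_id' ℝ A hA.1]
  exact cfc_congr fun x hx => Real.mul_self_sqrt (spectrum_nonneg_of_nonneg hA.nonneg hx)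

end SquareRoot

section Contraction

variable {n k l : Type} [Fintype k] [Fintype l]

/-- A rectangular matrix of operator norm at most one, expressed through the Loewner order. -/
def IsContraction [DecidableEq n] (W : Matrix k n ℂ) : Prop := Wᴴ * W ≤ 1

lemma IsContraction.conjTranspose_mul_mul_le [Finite n] [DecidableEq k] {U : Matrix l k ℂ}
    (hU : IsContraction U) (V : Matrix k n ℂ) : (U * V)ᴴ * (U * V) ≤ Vᴴ * V := by
  have h := (le_iff.1 hU).conjTranspose_mul_mul_same V
  rw [le_iff]
  convert h using 1
  simp only [conjTranspose_mul, Matrix.mul_sub, Matrix.sub_mul, Matrix.mul_one, Matrix.mul_assoc]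

lemma IsContraction.mul [Finite n] [DecidableEq n] [DecidableEq k] {U : Matrix l k ℂ}
    {V : Matrix k n ℂ} (hU : IsContraction U) (hV : IsContraction V) : IsContraction (U * V) :=
  (hU.conjTranspose_mul_mul_le V).trans hV

variable [Fintype n]

-- Both sides are Schur complement criteria for the block matrix `[1, W; Wᴴ, 1]`.
lemma IsContraction.conjTranspose [DecidableEq n] [DecidableEq k] {W : Matrix k n ℂ}
    (hW : IsContraction W) : IsContraction Wᴴ := by
  let _ : Invertible (1 : Matrix k k ℂ) := invertibleOne
  let _ : Invertible (1 : Matrix n n ℂ) := invertibleOne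
  have hblock : (fromBlocks 1 W Wᴴ 1).PosSemidef :=
    (PosDef.one.fromBlocks₁₁ W 1).2 (by simpa using le_iff.1 hW)
  simpa [IsContraction, le_iff] using (PosDef.fromBlocks₂₂ 1 W PosDef.one).1 hblock

lemma IsContraction.rtr_mul_mul_conjTranspose_le [DecidableEq n] {W : Matrix k n ℂ}
    (hW : IsContraction W) {P : Matrix n n ℂ} (hP : P.PosSemidef) :
    rtr (W * P * Wᴴ) ≤ rtr P := by
  have h := rtr_mono (hW.conjTranspose_mul_mul_le (msqrt P))
  rwa [rtr_mul_comm, conjTranspose_mul, conjTranspose_msqrt hP, msqrt_mul_self hP,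
    Matrix.mul_assoc, ← Matrix.mul_assoc (msqrt P), msqrt_mul_self hP, ← Matrix.mul_assoc] at h

end Contraction

section PolarDecomposition

variable {n k : Type} [Fintype n] [DecidableEq n] [Fintype k]

/-- The contraction `W` in the polar decomposition `N = W * √(Nᴴ * N)`. It vanishes on the kernel
of `N`, because `(√0)⁻¹ = 0`. -/
def polarFactor (N : Matrix k n ℂ) : Matrix k n ℂ := N * cfc (fun x => (√x)⁻¹) (Nᴴ * N)

lemma conjTranspose_polarFactor_mul (N : Matrix k n ℂ) :
    (polarFactor N)ᴴ * N = msqrt (Nᴴ * N) := by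
  have hN := posSemidef_conjTranspose_mul_self N
  have hinv : (cfc (fun x => (√x)⁻¹) (Nᴴ * N))ᴴ = cfc (fun x => (√x)⁻¹) (Nᴴ * N) :=
    cfc_predicate (fun x => (√x)⁻¹) (Nᴴ * N)
  rw [polarFactor, conjTranspose_mul, hinv, Matrix.mul_assoc, msqrt_eq_cfc hN]
  exact cfc_mul_self_eq hN fun x _ => by rw [inv_mul_eq_div, Real.div_sqrt]

lemma conjTranspose_polarFactor_mul_self (N : Matrix k n ℂ) :
    (polarFactor N)ᴴ * polarFactor N = cfc (fun x => √x * (√x)⁻¹) (Nᴴ * N) := by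
  rw [← cfc_mul_cfc, ← msqrt_eq_cfc (posSemidef_conjTranspose_mul_self N),
    ← conjTranspose_polarFactor_mul, Matrix.mul_assoc]
  rfl

lemma isContraction_polarFactor (N : Matrix k n ℂ) : IsContraction (polarFactor N) := by
  rw [IsContraction, conjTranspose_polarFactor_mul_self]
  exact cfc_le_one _ _ fun x _ => mul_inv_le_one

lemma polarFactor_mul_msqrt (N : Matrix k n ℂ) : polarFactor N * msqrt (Nᴴ * N) = N := by
  have hN := posSemidef_conjTranspose_mul_self N
  set W := polarFactor N
  set P := msqrt (Nᴴ * N) with hP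
  have hWN : Wᴴ * N = P := conjTranspose_polarFactor_mul N
  have hPself : Pᴴ = P := conjTranspose_msqrt hN
  have hNW : Nᴴ * W = P := by
    rw [← hPself, ← hWN, conjTranspose_mul, conjTranspose_conjTranspose]
  have hWW : Wᴴ * W * P = P := by
    rw [conjTranspose_polarFactor_mul_self, hP, msqrt_eq_cfc hN, cfc_mul_cfc]
    exact cfc_congr fun x _ => mul_inv_mul_cancel _
  have hzero : (N - W * P)ᴴ * (N - W * P) = 0 := by
    rw [conjTranspose_sub, conjTranspose_mul, hPself, Matrix.sub_mul, Matrix.mul_sub,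
      Matrix.mul_sub, Matrix.mul_assoc P, Matrix.mul_assoc P, hWN, ← Matrix.mul_assoc Nᴴ, hNW,
      ← Matrix.mul_assoc Wᴴ, hWW, msqrt_mul_self hN]
    simp only [sub_self]
  exact (sub_eq_zero.1 (conjTranspose_mul_self_eq_zero.1 hzero)).symm

lemma rtr_conjTranspose_polarFactor_mul (N : Matrix k n ℂ) :
    rtr ((polarFactor N)ᴴ * N) = traceNorm N :=
  congrArg rtr (conjTranspose_polarFactor_mul N)

-- With the polar decomposition `N = W * P`, the bound is the expansion of
-- `0 ≤ tr ((K - W) * P * (K - W)ᴴ)`.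
lemma IsContraction.rtr_conjTranspose_mul_le_traceNorm {K : Matrix k n ℂ} (hK : IsContraction K)
    (N : Matrix k n ℂ) : rtr (Kᴴ * N) ≤ traceNorm N := by
  have hP := msqrt_posSemidef (posSemidef_conjTranspose_mul_self N)
  set W := polarFactor N
  set P := msqrt (Nᴴ * N)
  have hWP : W * P = N := polarFactor_mul_msqrt N
  have hsq := rtr_nonneg (hP.mul_mul_conjTranspose_same (K - W))
  have hcross : rtr (K * P * Wᴴ) = rtr (Kᴴ * N) := by
    rw [← rtr_conjTranspose, Matrix.mul_assoc, conjTranspose_mul, conjTranspose_mul,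
      conjTranspose_conjTranspose, hP.1.eq, hWP, rtr_mul_comm]
  have hcross' : rtr (W * P * Kᴴ) = rtr (Kᴴ * N) := by rw [hWP, rtr_mul_comm]
  rw [conjTranspose_sub, Matrix.mul_sub, Matrix.sub_mul, Matrix.sub_mul, Matrix.sub_mul, rtr_sub,
    rtr_sub, rtr_sub, hcross, hcross'] at hsq
  have hKP := hK.rtr_mul_mul_conjTranspose_le hP
  have hWPW := (isContraction_polarFactor N).rtr_mul_mul_conjTranspose_le hP
  change _ ≤ rtr P
  linarith

end PolarDecomposition

section SqrtFidelity

variable {n k : Type} [Fintype n] [DecidableEq n] [Fintype k]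

/-- The root fidelity `√F(ρ, σ) = Tr √(√σ ρ √σ)`, the form of the fidelity in which it is a maximal
overlap of purifications. -/
def sqrtFidelity (ρ σ : Matrix n n ℂ) : ℝ := rtr (msqrt (msqrt σ * ρ * msqrt σ))

lemma sqrtFidelity_eq_traceNorm {ρ σ : Matrix n n ℂ} (hρ : ρ.PosSemidef) (hσ : σ.PosSemidef) :
    sqrtFidelity ρ σ = traceNorm (msqrt ρ * msqrt σ) := by
  rw [sqrtFidelity, traceNorm, conjTranspose_mul, conjTranspose_msqrt hρ, conjTranspose_msqrt hσ,
    Matrix.mul_assoc (msqrt σ) (msqrt ρ), ← Matrix.mul_assoc (msqrt ρ), msqrt_mul_self hρ,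
    Matrix.mul_assoc]

lemma sqrtFidelity_nonneg {ρ σ : Matrix n n ℂ} (hρ : ρ.PosSemidef) (hσ : σ.PosSemidef) :
    0 ≤ sqrtFidelity ρ σ := by
  rw [sqrtFidelity_eq_traceNorm hρ hσ]
  exact rtr_nonneg (msqrt_posSemidef (posSemidef_conjTranspose_mul_self _))

lemma exists_isContraction_eq_msqrt_mul (a : Matrix n k ℂ) :
    ∃ U : Matrix k n ℂ, IsContraction U ∧ a = msqrt (a * aᴴ) * Uᴴ := by
  have h := polarFactor_mul_msqrt aᴴ
  rw [conjTranspose_conjTranspose] at h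
  refine ⟨polarFactor aᴴ, isContraction_polarFactor _, ?_⟩
  rw [← conjTranspose_msqrt (posSemidef_self_mul_conjTranspose a), ← conjTranspose_mul, h,
    conjTranspose_conjTranspose]

lemma rtr_mul_conjTranspose_le_sqrtFidelity (a b : Matrix n k ℂ) :
    rtr (a * bᴴ) ≤ sqrtFidelity (a * aᴴ) (b * bᴴ) := by
  classical
  obtain ⟨U, hU, ha⟩ := exists_isContraction_eq_msqrt_mul a
  obtain ⟨V, hV, hb⟩ := exists_isContraction_eq_msqrt_mul b
  have hr := conjTranspose_msqrt (posSemidef_self_mul_conjTranspose a)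
  rw [sqrtFidelity_eq_traceNorm (posSemidef_self_mul_conjTranspose a)
    (posSemidef_self_mul_conjTranspose b)]
  generalize msqrt (a * aᴴ) = r at ha hr ⊢
  generalize msqrt (b * bᴴ) = s at hb ⊢
  calc rtr (a * bᴴ) = rtr (b * aᴴ) := by
        rw [← rtr_conjTranspose, conjTranspose_mul, conjTranspose_conjTranspose]
    _ = rtr (s * (Vᴴ * U * r)) := by
        rw [ha, hb, conjTranspose_mul, conjTranspose_conjTranspose, hr]
        simp only [Matrix.mul_assoc]
    _ = rtr ((Uᴴ * V)ᴴ * (r * s)) := by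
        rw [rtr_mul_comm, conjTranspose_mul, conjTranspose_conjTranspose]
        simp only [Matrix.mul_assoc]
    _ ≤ traceNorm (r * s) := (hU.conjTranspose.mul hV).rtr_conjTranspose_mul_le_traceNorm _

/-- The canonical purification of `σ`: under `Matrix n k ℂ ≃ ℂ^n ⊗ ℂ^k`, a matrix `a` purifies `σ`
when `a * aᴴ = σ`. The zero columns make room for purifications of other matrices with the same
purifying system. -/
def purification (σ : Matrix n n ℂ) : Matrix n (n ⊕ n) ℂ := fromCols (msqrt σ) 0

lemma purification_mul_conjTranspose {σ : Matrix n n ℂ} (hσ : σ.PosSemidef) :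
    purification σ * (purification σ)ᴴ = σ := by
  rw [purification, conjTranspose_fromCols_eq_fromRows_conjTranspose, fromCols_mul_fromRows,
    conjTranspose_msqrt hσ, msqrt_mul_self hσ, Matrix.zero_mul, add_zero]

-- The second block of columns supplies what `√ρ * W * Wᴴ * √ρ` lacks to be `ρ`.
lemma exists_purification_trace_eq_sqrtFidelity {ρ σ : Matrix n n ℂ} (hρ : ρ.PosSemidef)
    (hσ : σ.PosSemidef) : ∃ a : Matrix n (n ⊕ n) ℂ,
      a * aᴴ = ρ ∧ (a * (purification σ)ᴴ).trace = sqrtFidelity ρ σ := by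
  have hρH := conjTranspose_msqrt hρ
  set W := polarFactor (msqrt ρ * msqrt σ) with hW
  have hdefect : (ρ - msqrt ρ * W * (msqrt ρ * W)ᴴ).PosSemidef := by
    have h := (isContraction_polarFactor
      (msqrt ρ * msqrt σ)).conjTranspose.conjTranspose_mul_mul_le (msqrt ρ)
    simpa only [le_iff, conjTranspose_mul, conjTranspose_conjTranspose, hρH,
      msqrt_mul_self hρ] using h
  refine ⟨fromCols (msqrt ρ * W) (msqrt (ρ - msqrt ρ * W * (msqrt ρ * W)ᴴ)), ?_, ?_⟩
  · rw [conjTranspose_fromCols_eq_fromRows_conjTranspose, fromCols_mul_fromRows,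
      conjTranspose_msqrt hdefect, msqrt_mul_self hdefect, add_sub_cancel]
  · have hσH := conjTranspose_msqrt hσ
    have hN : (Wᴴ * (msqrt ρ * msqrt σ)).PosSemidef := by
      rw [hW, conjTranspose_polarFactor_mul]
      exact msqrt_posSemidef (posSemidef_conjTranspose_mul_self _)
    rw [purification, conjTranspose_fromCols_eq_fromRows_conjTranspose, fromCols_mul_fromRows,
      conjTranspose_zero, Matrix.mul_zero, add_zero, hσH]
    calc (msqrt ρ * W * msqrt σ).trace = ((Wᴴ * (msqrt ρ * msqrt σ))ᴴ).trace := by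
          rw [conjTranspose_mul, conjTranspose_mul, conjTranspose_conjTranspose, hρH, hσH,
            trace_mul_comm, Matrix.mul_assoc]
      _ = sqrtFidelity ρ σ := by
          rw [hN.1.eq, ← ofReal_rtr hN, hW, rtr_conjTranspose_polarFactor_mul,
            sqrtFidelity_eq_traceNorm hρ hσ]

lemma exists_trace_mul_conjTranspose_eq_sqrtFidelity {ρ σ : Matrix n n ℂ} (hρ : ρ.PosSemidef)
    (hσ : σ.PosSemidef) : ∃ a b : Matrix n (n ⊕ n) ℂ,
      a * aᴴ = ρ ∧ b * bᴴ = σ ∧ (a * bᴴ).trace = sqrtFidelity ρ σ := by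
  obtain ⟨a, ha, hab⟩ := exists_purification_trace_eq_sqrtFidelity hρ hσ
  exact ⟨a, purification σ, ha, purification_mul_conjTranspose hσ, hab⟩

lemma sqrtFidelity_comm {ρ σ : Matrix n n ℂ} (hρ : ρ.PosSemidef) (hσ : σ.PosSemidef) :
    sqrtFidelity ρ σ = sqrtFidelity σ ρ := by
  have hle : ∀ {ρ σ : Matrix n n ℂ}, ρ.PosSemidef → σ.PosSemidef →
      sqrtFidelity ρ σ ≤ sqrtFidelity σ ρ := by
    intro ρ σ hρ hσ
    obtain ⟨a, b, rfl, rfl, hab⟩ := exists_trace_mul_conjTranspose_eq_sqrtFidelity hρ hσ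
    calc sqrtFidelity (a * aᴴ) (b * bᴴ) = rtr (a * bᴴ) := by rw [rtr, hab, Complex.ofReal_re]
      _ = rtr (b * aᴴ) := by
        rw [← rtr_conjTranspose, conjTranspose_mul, conjTranspose_conjTranspose]
      _ ≤ sqrtFidelity (b * bᴴ) (a * aᴴ) := rtr_mul_conjTranspose_le_sqrtFidelity b a
  exact (hle hρ hσ).antisymm (hle hσ hρ)

lemma sqrtFidelity_mul_le_kronecker [DecidableEq k] {ρ σ : Matrix n n ℂ} {ρ' σ' : Matrix k k ℂ}
    (hρ : ρ.PosSemidef) (hσ : σ.PosSemidef) (hρ' : ρ'.PosSemidef) (hσ' : σ'.PosSemidef) :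
    sqrtFidelity ρ σ * sqrtFidelity ρ' σ' ≤ sqrtFidelity (ρ ⊗ₖ ρ') (σ ⊗ₖ σ') := by
  obtain ⟨a, b, rfl, rfl, hab⟩ := exists_trace_mul_conjTranspose_eq_sqrtFidelity hρ hσ
  obtain ⟨a', b', rfl, rfl, hab'⟩ := exists_trace_mul_conjTranspose_eq_sqrtFidelity hρ' hσ'
  have h := rtr_mul_conjTranspose_le_sqrtFidelity (a ⊗ₖ a') (b ⊗ₖ b')
  simp only [conjTranspose_kronecker, ← mul_kronecker_mul] at h
  rwa [rtr, trace_kronecker, hab, hab', ← Complex.ofReal_mul, Complex.ofReal_re] at h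

lemma rtr_le_sqrtFidelity_of_posSemidef_fromBlocks {ρ X Y σ : Matrix n n ℂ}
    (h : (fromBlocks ρ X Y σ).PosSemidef) : rtr X ≤ sqrtFidelity ρ σ := by
  obtain ⟨a, b, hab⟩ : ∃ a b : Matrix n (n ⊕ n) ℂ,
      fromBlocks ρ X Y σ = fromBlocks (a * aᴴ) (a * bᴴ) (b * aᴴ) (b * bᴴ) := by
    set G := msqrt (fromBlocks ρ X Y σ)
    refine ⟨G.toRows₁, G.toRows₂, ?_⟩
    rw [← fromRows_mul_fromCols, ← conjTranspose_fromRows_eq_fromCols_conjTranspose,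
      fromRows_toRows, conjTranspose_msqrt h, msqrt_mul_self h]
  obtain ⟨rfl, rfl, -, rfl⟩ := fromBlocks_inj.1 hab
  exact rtr_mul_conjTranspose_le_sqrtFidelity a b

end SqrtFidelity

section HilbertSchmidt

variable {n k : Type} [Fintype n] [Fintype k]

lemma inner_toLp_vec (a b : Matrix n k ℂ) :
    inner ℝ (WithLp.toLp 2 a.vec : EuclideanSpace ℂ (k × n)) (WithLp.toLp 2 b.vec) =
      rtr (a * bᴴ) := by
  simp only [PiLp.inner_apply, Complex.inner, vec, Fintype.sum_prod_type, rtr, trace, diag_apply,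
    mul_apply, conjTranspose_apply, Complex.re_sum]
  rw [Finset.sum_comm]
  exact Finset.sum_congr rfl fun i _ => Finset.sum_congr rfl fun j _ => by
    rw [← Complex.conj_re, map_mul, Complex.conj_conj, mul_comm, Complex.star_def]

lemma norm_toLp_vec {a : Matrix n k ℂ} (ha : rtr (a * aᴴ) = 1) :
    ‖(WithLp.toLp 2 a.vec : EuclideanSpace ℂ (k × n))‖ = 1 := by
  rw [← inner_toLp_vec, real_inner_self_eq_norm_sq] at ha
  exact (pow_eq_one_iff_of_nonneg (norm_nonneg _) two_ne_zero).1 ha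

lemma arccos_rtr_mul_conjTranspose_le_add {a b c : Matrix n k ℂ} (ha : rtr (a * aᴴ) = 1)
    (hb : rtr (b * bᴴ) = 1) (hc : rtr (c * cᴴ) = 1) :
    Real.arccos (rtr (a * cᴴ)) ≤
      Real.arccos (rtr (a * bᴴ)) + Real.arccos (rtr (b * cᴴ)) := by
  have h := InnerProductGeometry.angle_le_angle_add_angle
    (WithLp.toLp 2 a.vec : EuclideanSpace ℂ (k × n)) (WithLp.toLp 2 b.vec) (WithLp.toLp 2 c.vec)
  simpa only [InnerProductGeometry.angle, inner_toLp_vec, norm_toLp_vec ha, norm_toLp_vec hb,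
    norm_toLp_vec hc, mul_one, div_one] using h

end HilbertSchmidt

section SineDistance

variable {n k : Type} [Fintype n] [DecidableEq n] [Fintype k] [DecidableEq k]

/-- The Bures angle `arccos √F(ρ, σ)`, whose sine is the sine distance. -/
def buresAngle (ρ σ : Matrix n n ℂ) : ℝ := Real.arccos (sqrtFidelity ρ σ)

lemma sineDist_eq_sin_buresAngle (ρ σ : Matrix n n ℂ) :
    sineDist ρ σ = Real.sin (buresAngle ρ σ) :=
  (Real.sin_arccos _).symm

lemma buresAngle_mem_Icc {ρ σ : Matrix n n ℂ} (hρ : ρ.PosSemidef) (hσ : σ.PosSemidef) :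
    buresAngle ρ σ ∈ Set.Icc 0 (Real.pi / 2) :=
  ⟨Real.arccos_nonneg _, Real.arccos_le_pi_div_two.2 (sqrtFidelity_nonneg hρ hσ)⟩

lemma buresAngle_triangle {ρ σ τ : Matrix n n ℂ} (hρ : IsState ρ) (hσ : IsState σ)
    (hτ : IsState τ) : buresAngle ρ τ ≤ buresAngle ρ σ + buresAngle σ τ := by
  obtain ⟨a, ha, hac⟩ := exists_purification_trace_eq_sqrtFidelity hρ.1 hσ.1
  obtain ⟨b, hb, hbc⟩ := exists_purification_trace_eq_sqrtFidelity hτ.1 hσ.1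
  have hc := purification_mul_conjTranspose hσ.1
  set c := purification σ
  have hac' : rtr (a * cᴴ) = sqrtFidelity ρ σ := by rw [rtr, hac, Complex.ofReal_re]
  have hcb' : rtr (c * bᴴ) = sqrtFidelity σ τ := by
    rw [← rtr_conjTranspose, conjTranspose_mul, conjTranspose_conjTranspose, rtr, hbc,
      Complex.ofReal_re, sqrtFidelity_comm hτ.1 hσ.1]
  calc buresAngle ρ τ ≤ Real.arccos (rtr (a * bᴴ)) := by
        rw [buresAngle, ← ha, ← hb]
        exact Real.arccos_le_arccos (rtr_mul_conjTranspose_le_sqrtFidelity a b)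
    _ ≤ Real.arccos (rtr (a * cᴴ)) + Real.arccos (rtr (c * bᴴ)) :=
        arccos_rtr_mul_conjTranspose_le_add (ha.symm ▸ hρ.rtr_eq_one) (hc.symm ▸ hσ.rtr_eq_one)
          (hb.symm ▸ hτ.rtr_eq_one)
    _ = buresAngle ρ σ + buresAngle σ τ := by rw [hac', hcb', buresAngle, buresAngle]

lemma sin_le_sin_add_sin {θ x y : ℝ} (hθ : 0 ≤ θ) (hx : x ∈ Set.Icc 0 (Real.pi / 2))
    (hy : y ∈ Set.Icc 0 (Real.pi / 2)) (h : θ ≤ x + y) :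
    Real.sin θ ≤ Real.sin x + Real.sin y := by
  have hsin : ∀ z ∈ Set.Icc 0 (Real.pi / 2), 0 ≤ Real.sin z := fun z hz =>
    Real.sin_nonneg_of_nonneg_of_le_pi hz.1 (by linarith [hz.2, Real.pi_pos])
  rcases le_total θ x with hθx | hxθ
  · have := Real.sin_le_sin_of_le_of_le_pi_div_two (by linarith [Real.pi_pos]) hx.2 hθx
    linarith [hsin y hy]
  · have hsub : Real.sin (θ - x) ≤ Real.sin y :=
      Real.sin_le_sin_of_le_of_le_pi_div_two (by linarith [Real.pi_pos]) hy.2 (by linarith)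
    calc Real.sin θ = Real.sin x * Real.cos (θ - x) + Real.cos x * Real.sin (θ - x) := by
          rw [← Real.sin_add, add_sub_cancel]
      _ ≤ Real.sin x * 1 + 1 * Real.sin (θ - x) := by
          gcongr
          · exact hsin x hx
          · exact Real.cos_le_one _
          · exact hsin _ ⟨by linarith, by linarith [hy.2]⟩
          · exact Real.cos_le_one _
      _ ≤ Real.sin x + Real.sin y := by linarith

lemma sineDist_triangle {ρ σ τ : Matrix n n ℂ} (hρ : IsState ρ) (hσ : IsState σ)
    (hτ : IsState τ) : sineDist ρ τ ≤ sineDist ρ σ + sineDist σ τ := by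
  simp only [sineDist_eq_sin_buresAngle]
  exact sin_le_sin_add_sin (buresAngle_mem_Icc hρ.1 hτ.1).1 (buresAngle_mem_Icc hρ.1 hσ.1)
    (buresAngle_mem_Icc hσ.1 hτ.1) (buresAngle_triangle hρ hσ hτ)

lemma sqrtFidelity_le_one {ρ σ : Matrix n n ℂ} (hρ : IsState ρ) (hσ : IsState σ) :
    sqrtFidelity ρ σ ≤ 1 := by
  obtain ⟨a, b, ha, hb, hab⟩ := exists_trace_mul_conjTranspose_eq_sqrtFidelity hρ.1 hσ.1
  have h := real_inner_le_norm (WithLp.toLp 2 a.vec : EuclideanSpace ℂ ((n ⊕ n) × n))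
    (WithLp.toLp 2 b.vec)
  rwa [inner_toLp_vec, norm_toLp_vec (ha.symm ▸ hρ.rtr_eq_one),
    norm_toLp_vec (hb.symm ▸ hσ.rtr_eq_one), one_mul, rtr, hab, Complex.ofReal_re] at h

lemma sineDist_sq {ρ σ : Matrix n n ℂ} (hρ : IsState ρ) (hσ : IsState σ) :
    sineDist ρ σ ^ 2 = 1 - sqrtFidelity ρ σ ^ 2 :=
  Real.sq_sqrt (sub_nonneg.2 (pow_le_one₀ (sqrtFidelity_nonneg hρ.1 hσ.1)
    (sqrtFidelity_le_one hρ hσ)))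

lemma sineDist_self {ρ : Matrix n n ℂ} (hρ : IsState ρ) : sineDist ρ ρ = 0 := by
  have h := rtr_mul_conjTranspose_le_sqrtFidelity (msqrt ρ) (msqrt ρ)
  rw [conjTranspose_msqrt hρ.1, msqrt_mul_self hρ.1, hρ.rtr_eq_one] at h
  rw [sineDist_eq_sin_buresAngle, buresAngle, Real.arccos_of_one_le h, Real.sin_zero]

lemma sineDist_le_of_sqrtFidelity_le {ρ σ : Matrix n n ℂ} {ρ' σ' : Matrix k k ℂ}
    (hρ : ρ.PosSemidef) (hσ : σ.PosSemidef) (h : sqrtFidelity ρ σ ≤ sqrtFidelity ρ' σ') :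
    sineDist ρ' σ' ≤ sineDist ρ σ :=
  Real.sqrt_le_sqrt (sub_le_sub_left (pow_le_pow_left₀ (sqrtFidelity_nonneg hρ hσ) h 2) 1)

lemma sineDist_kronecker_le {ρ σ : Matrix n n ℂ} {ρ' σ' : Matrix k k ℂ} (hρ : IsState ρ)
    (hσ : IsState σ) (hρ' : IsState ρ') (hσ' : IsState σ') :
    sineDist (ρ ⊗ₖ ρ') (σ ⊗ₖ σ') ≤ sineDist ρ σ + sineDist ρ' σ' := by
  have hmul : (sqrtFidelity ρ σ * sqrtFidelity ρ' σ') ^ 2 ≤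
      sqrtFidelity (ρ ⊗ₖ ρ') (σ ⊗ₖ σ') ^ 2 :=
    pow_le_pow_left₀ (mul_nonneg (sqrtFidelity_nonneg hρ.1 hσ.1) (sqrtFidelity_nonneg hρ'.1 hσ'.1))
      (sqrtFidelity_mul_le_kronecker hρ.1 hσ.1 hρ'.1 hσ'.1) 2
  have hp : 0 ≤ sineDist ρ σ := Real.sqrt_nonneg _
  have hq : 0 ≤ sineDist ρ' σ' := Real.sqrt_nonneg _
  refine abs_le_of_sq_le_sq' ?_ (add_nonneg hp hq) |>.2
  calc sineDist (ρ ⊗ₖ ρ') (σ ⊗ₖ σ') ^ 2 ≤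
        1 - (sqrtFidelity ρ σ * sqrtFidelity ρ' σ') ^ 2 := by
          rw [sineDist_sq (hρ.kronecker hρ') (hσ.kronecker hσ')]
          linarith
    _ = sineDist ρ σ ^ 2 + sineDist ρ' σ' ^ 2 - (sineDist ρ σ * sineDist ρ' σ') ^ 2 := by
          rw [mul_pow, mul_pow, sineDist_sq hρ hσ, sineDist_sq hρ' hσ']
          ring
    _ ≤ (sineDist ρ σ + sineDist ρ' σ') ^ 2 := by
          nlinarith [mul_nonneg hp hq]

end SineDistance

section TwoPositive

variable {n k : Type}

/-- A map between matrix algebras which is positive entrywise on `2 × 2` block matrices; linearity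
is not part of the definition. This is all that data processing for the fidelity requires of a
quantum channel besides trace preservation. -/
def IsTwoPositive (Φ : Matrix n n ℂ → Matrix k k ℂ) : Prop :=
  ∀ A B C D, (fromBlocks A B C D).PosSemidef → (fromBlocks (Φ A) (Φ B) (Φ C) (Φ D)).PosSemidef

lemma IsTwoPositive.posSemidef {Φ : Matrix n n ℂ → Matrix k k ℂ} (hΦ : IsTwoPositive Φ)
    {A : Matrix n n ℂ} (hA : A.PosSemidef) : (Φ A).PosSemidef := by
  have hblock : (fromBlocks A A A A).PosSemidef := by
    convert hA.submatrix (Sum.elim id id) using 1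
    ext (i | i) (j | j) <;> rfl
  exact (hΦ A A A A hblock).submatrix Sum.inl

lemma IsQChannel.isTwoPositive [Fintype n] [Fintype k]
    {Φ : Matrix n n ℂ →ₗ[ℂ] Matrix k k ℂ} (hΦ : IsQChannel Φ) : IsTwoPositive Φ := by
  intro A B C D h
  let e (ι : Type) : Fin 2 × ι ≃ ι ⊕ ι :=
    (finTwoEquiv.prodCongr (Equiv.refl ι)).trans (Equiv.boolProdEquivSum ι)
  convert (hΦ.2 2 one_le_two _ (h.submatrix (e n))).submatrix (e k).symm using 1
  ext (i | i) (j | j) <;> rfl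

lemma posSemidef_fromBlocks_mul_conjTranspose [Finite n] [Fintype k] (a b : Matrix n k ℂ) :
    (fromBlocks (a * aᴴ) (a * bᴴ) (b * aᴴ) (b * bᴴ)).PosSemidef := by
  have h := posSemidef_self_mul_conjTranspose (fromRows a b)
  rwa [conjTranspose_fromRows_eq_fromCols_conjTranspose, fromRows_mul_fromCols] at h

lemma IsTwoPositive.isState [Fintype n] [Fintype k] {Φ : Matrix n n ℂ → Matrix k k ℂ}
    (hΦ : IsTwoPositive Φ) (htr : ∀ A, (Φ A).trace = A.trace) {ρ : Matrix n n ℂ}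
    (hρ : IsState ρ) : IsState (Φ ρ) :=
  ⟨hΦ.posSemidef hρ.1, (htr ρ).trans hρ.2⟩

lemma IsTwoPositive.sqrtFidelity_le [Fintype n] [DecidableEq n] [Fintype k] [DecidableEq k]
    {Φ : Matrix n n ℂ → Matrix k k ℂ} (hΦ : IsTwoPositive Φ)
    (htr : ∀ A, (Φ A).trace = A.trace) {ρ σ : Matrix n n ℂ}
    (hρ : ρ.PosSemidef) (hσ : σ.PosSemidef) : sqrtFidelity ρ σ ≤ sqrtFidelity (Φ ρ) (Φ σ) := by
  obtain ⟨a, b, rfl, rfl, hab⟩ := exists_trace_mul_conjTranspose_eq_sqrtFidelity hρ hσ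
  calc sqrtFidelity (a * aᴴ) (b * bᴴ) = rtr (Φ (a * bᴴ)) := by
        rw [rtr, htr, hab, Complex.ofReal_re]
    _ ≤ sqrtFidelity (Φ (a * aᴴ)) (Φ (b * bᴴ)) := rtr_le_sqrtFidelity_of_posSemidef_fromBlocks
        (hΦ _ _ _ _ (posSemidef_fromBlocks_mul_conjTranspose a b))

end TwoPositive

section TensorPower

variable {n k : Type}

instance [Finite n] (m : ℕ) : Finite (tpow n m) :=
  have := Fintype.ofFinite n
  inferInstance

lemma kronecker_le_kronecker [Finite n] [Finite k] {A B : Matrix n n ℂ} {C D : Matrix k k ℂ}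
    (hA : 0 ≤ A) (hAB : A ≤ B) (hC : 0 ≤ C) (hCD : C ≤ D) : A ⊗ₖ C ≤ B ⊗ₖ D := by
  rw [le_iff]
  have h := ((le_iff.1 hAB).kronecker (hC.trans hCD).posSemidef).add
    (hA.posSemidef.kronecker (le_iff.1 hCD))
  convert h using 1
  ext
  simp only [Matrix.sub_apply, Matrix.add_apply, kroneckerMap_apply]
  ring

variable [DecidableEq n]

lemma tpowMat_smul (c : ℂ) (A : Matrix n n ℂ) :
    ∀ m, tpowMat (c • A) m = c ^ m • tpowMat A m
  | 0 => by simp [tpowMat]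
  | m + 1 => by
    rw [tpowMat, tpowMat, tpowMat_smul c A m, smul_kronecker, kronecker_smul, smul_smul, pow_succ]
    rfl

lemma posSemidef_tpowMat [Finite n] {A : Matrix n n ℂ} (hA : A.PosSemidef) :
    ∀ m, (tpowMat A m).PosSemidef
  | 0 => PosSemidef.one
  | m + 1 => (posSemidef_tpowMat hA m).kronecker hA

lemma tpowMat_le_tpowMat [Finite n] {A B : Matrix n n ℂ} (hA : 0 ≤ A) (hAB : A ≤ B) :
    ∀ m, tpowMat A m ≤ tpowMat B m
  | 0 => le_rfl
  | m + 1 => kronecker_le_kronecker (posSemidef_tpowMat hA.posSemidef m).nonneg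
      (tpowMat_le_tpowMat hA hAB m) hA hAB

lemma loewnerLE_tpowMat [Finite n] {A B : Matrix n n ℂ} (hA : A.PosSemidef) {lam : ℝ}
    (h : loewnerLE A ((((2 : ℝ) ^ lam : ℝ) : ℂ) • B)) (m : ℕ) :
    loewnerLE (tpowMat A m) ((((2 : ℝ) ^ (m * lam) : ℝ) : ℂ) • tpowMat B m) := by
  have hm := tpowMat_le_tpowMat hA.nonneg (le_iff.2 h) m
  rwa [tpowMat_smul, ← Complex.ofReal_pow, ← Real.rpow_mul_natCast zero_le_two, mul_comm lam] at hm

variable [Fintype n]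

lemma isState_tpowMat {ρ : Matrix n n ℂ} (hρ : IsState ρ) : ∀ m, IsState (tpowMat ρ m)
  | 0 => ⟨PosSemidef.one, trace_one.trans (congrArg _ Fintype.card_punit |>.trans Nat.cast_one)⟩
  | m + 1 => (isState_tpowMat hρ m).kronecker hρ

lemma sineDist_tpowMat_le {ρ σ : Matrix n n ℂ} (hρ : IsState ρ) (hσ : IsState σ) :
    ∀ m : ℕ, sineDist (tpowMat ρ m) (tpowMat σ m) ≤ m * sineDist ρ σ
  | 0 => by
    rw [Nat.cast_zero, zero_mul]
    exact (sineDist_self (isState_tpowMat hρ 0)).le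
  | m + 1 => by
    rw [Nat.cast_succ, add_one_mul]
    exact (sineDist_kronecker_le (isState_tpowMat hρ m) (isState_tpowMat hσ m) hρ hσ).trans
      (add_le_add_left (sineDist_tpowMat_le hρ hσ m) _)

end TensorPower

section MaxRelativeEntropy

variable {n : Type}

lemma loewnerLE_trans_smul {ρ σ τ : Matrix n n ℂ} {a b : ℝ}
    (hρ : loewnerLE ρ ((((2 : ℝ) ^ a : ℝ) : ℂ) • σ))
    (hσ : loewnerLE σ ((((2 : ℝ) ^ b : ℝ) : ℂ) • τ)) :
    loewnerLE ρ ((((2 : ℝ) ^ (a + b) : ℝ) : ℂ) • τ) := by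
  have ha : (0 : ℂ) ≤ ((2 : ℝ) ^ a : ℝ) := by
    rw [Complex.zero_le_real]
    positivity
  have h := PosSemidef.add hρ (PosSemidef.smul hσ ha)
  rwa [smul_sub, smul_smul, ← Complex.ofReal_mul, ← Real.rpow_add two_pos,
    sub_add_sub_cancel'] at h

lemma dMax_le_add_of_loewnerLE (ρ : Matrix n n ℂ) {σ τ : Matrix n n ℂ} {lam : ℝ}
    (h : loewnerLE σ ((((2 : ℝ) ^ lam : ℝ) : ℂ) • τ)) : dMax ρ τ ≤ dMax ρ σ + lam := by
  rw [← EReal.sub_le_iff_le_add (.inl (EReal.coe_ne_bot _)) (.inl (EReal.coe_ne_top _))]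
  refine le_sInf ?_
  rintro _ ⟨κ, rfl, hκ⟩
  rw [EReal.sub_le_iff_le_add (.inl (EReal.coe_ne_bot _)) (.inl (EReal.coe_ne_top _))]
  exact sInf_le ⟨κ + lam, (EReal.coe_add _ _).symm, loewnerLE_trans_smul hκ h⟩

variable [Fintype n]

lemma neg_logb_rtr_le_dMax {ρ : Matrix n n ℂ} (hρ : IsState ρ) (σ : Matrix n n ℂ) :
    ((-Real.logb 2 (rtr σ) : ℝ) : EReal) ≤ dMax ρ σ := by
  refine le_sInf ?_
  rintro _ ⟨lam, rfl, hlam⟩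
  have htr : 1 ≤ (2 : ℝ) ^ lam * rtr σ := by
    rw [← rtr_ofReal_smul, ← hρ.rtr_eq_one]
    exact rtr_mono hlam
  have hpow : (2 : ℝ) ^ (-lam) ≤ rtr σ := by
    rwa [Real.rpow_neg zero_le_two, inv_le_iff_one_le_mul₀' (by positivity)]
  rw [EReal.coe_le_coe_iff, neg_le, Real.le_logb_iff_rpow_le one_lt_two]
  · exact hpow
  · exact lt_of_lt_of_le (by positivity) hpow

variable [DecidableEq n]

lemma dMaxSmooth_ne_bot (δ : ℝ) (ρ σ : Matrix n n ℂ) : dMaxSmooth δ ρ σ ≠ ⊥ :=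
  ne_bot_of_le_ne_bot (EReal.coe_ne_bot (-Real.logb 2 (rtr σ)))
    (le_iInf₂ fun _ h => neg_logb_rtr_le_dMax h.1 σ)

lemma dMaxSmooth_le_add_of_loewnerLE (δ : ℝ) (ρ : Matrix n n ℂ) {σ τ : Matrix n n ℂ} {lam : ℝ}
    (h : loewnerLE σ ((((2 : ℝ) ^ lam : ℝ) : ℂ) • τ)) :
    dMaxSmooth δ ρ τ ≤ dMaxSmooth δ ρ σ + lam := by
  rw [← EReal.sub_le_iff_le_add (.inl (EReal.coe_ne_bot _)) (.inl (EReal.coe_ne_top _))]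
  refine le_iInf₂ fun ω hω => ?_
  rw [EReal.sub_le_iff_le_add (.inl (EReal.coe_ne_bot _)) (.inl (EReal.coe_ne_top _))]
  exact (iInf₂_le ω hω).trans (dMax_le_add_of_loewnerLE ω h)

lemma dMaxSmooth_add_le {ε δ : ℝ} {ρ ν : Matrix n n ℂ} (hρ : IsState ρ) (hν : IsState ν)
    (hρν : sineDist ρ ν ≤ ε) (σ : Matrix n n ℂ) :
    dMaxSmooth (ε + δ) ρ σ ≤ dMaxSmooth δ ν σ :=
  le_iInf₂ fun ω hω => iInf₂_le ω
    ⟨hω.1, (sineDist_triangle hρ hν hω.1).trans (add_le_add hρν hω.2)⟩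

lemma exists_isState_loewnerLE_of_dMaxSmooth_lt {δ : ℝ} {ρ σ : Matrix n n ℂ} {x : EReal}
    (h : dMaxSmooth δ ρ σ < x) : ∃ ν, IsState ν ∧ sineDist ρ ν ≤ δ ∧
      ∃ lam : ℝ, (lam : EReal) < x ∧ loewnerLE ν ((((2 : ℝ) ^ lam : ℝ) : ℂ) • σ) := by
  simp only [dMaxSmooth, iInf_lt_iff] at h
  obtain ⟨ν, ⟨hν, hρν⟩, hlt⟩ := h
  obtain ⟨_, ⟨lam, rfl, hle⟩, hlam⟩ := sInf_lt_iff.1 hlt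
  exact ⟨ν, hν, hρν, lam, hlam, hle⟩

end MaxRelativeEntropy

section ChainRule

variable {n k : Type} [DecidableEq k] {F : Matrix n n ℂ →ₗ[ℂ] Matrix k k ℂ}

lemma loewnerLE_map_tpowMat [Finite k]
    (hF : ∀ M : Matrix n n ℂ, M.PosSemidef → (F M).PosSemidef) {ν σ : Matrix n n ℂ}
    (hν : ν.PosSemidef) {lam : ℝ}
    (h : loewnerLE ν ((((2 : ℝ) ^ lam : ℝ) : ℂ) • σ)) (m : ℕ) :
    loewnerLE (tpowMat (F ν) m) ((((2 : ℝ) ^ (m * lam) : ℝ) : ℂ) • tpowMat (F σ) m) := by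
  have hFle := hF _ h
  rw [map_sub, map_smul] at hFle
  exact loewnerLE_tpowMat (hF ν hν) hFle m

variable [Fintype n] [DecidableEq n] [Fintype k] {E : Matrix n n ℂ → Matrix k k ℂ}

lemma sineDist_tpowMat_map_le (hE : IsTwoPositive E) (htr : ∀ M, (E M).trace = M.trace)
    {ρ ν : Matrix n n ℂ} (hρ : IsState ρ) (hν : IsState ν) (m : ℕ) :
    sineDist (tpowMat (E ρ) m) (tpowMat (E ν) m) ≤ m * sineDist ρ ν :=
  calc sineDist (tpowMat (E ρ) m) (tpowMat (E ν) m) ≤ m * sineDist (E ρ) (E ν) :=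
        sineDist_tpowMat_le (hE.isState htr hρ) (hE.isState htr hν) m
    _ ≤ m * sineDist ρ ν := by
        gcongr
        exact sineDist_le_of_sqrtFidelity_le hρ.1 hν.1 (hE.sqrtFidelity_le htr hρ.1 hν.1)

lemma dMaxSmooth_tpowMat_map_le (hE : IsTwoPositive E) (htr : ∀ M, (E M).trace = M.trace)
    (hF : ∀ M : Matrix n n ℂ, M.PosSemidef → (F M).PosSemidef) {ρ ν σ : Matrix n n ℂ}
    (hρ : IsState ρ) (hν : IsState ν) {lam : ℝ}
    (hle : loewnerLE ν ((((2 : ℝ) ^ lam : ℝ) : ℂ) • σ)) (m : ℕ) {ε : ℝ}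
    (hρν : m * sineDist ρ ν ≤ ε) (δ : ℝ) :
    dMaxSmooth (ε + δ) (tpowMat (E ρ) m) (tpowMat (F σ) m) ≤
      dMaxSmooth δ (tpowMat (E ν) m) (tpowMat (F ν) m) + ((m * lam : ℝ) : EReal) :=
  calc dMaxSmooth (ε + δ) (tpowMat (E ρ) m) (tpowMat (F σ) m)
      ≤ dMaxSmooth δ (tpowMat (E ν) m) (tpowMat (F σ) m) :=
        dMaxSmooth_add_le (isState_tpowMat (hE.isState htr hρ) m)
          (isState_tpowMat (hE.isState htr hν) m)
          ((sineDist_tpowMat_map_le hE htr hρ hν m).trans hρν) _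
    _ ≤ _ := dMaxSmooth_le_add_of_loewnerLE δ _ (loewnerLE_map_tpowMat hF hν.1 hle m)

end ChainRule

theorem dMaxSmooth_oneshot_chain_general {n k : Type} [Fintype n] [DecidableEq n] [Fintype k]
    [DecidableEq k] (E : Matrix n n ℂ → Matrix k k ℂ) (F : Matrix n n ℂ →ₗ[ℂ] Matrix k k ℂ)
    (hE : IsTwoPositive E) (htr : ∀ M, (E M).trace = M.trace)
    (hF : ∀ M : Matrix n n ℂ, M.PosSemidef → (F M).PosSemidef)
    (ρ σ : Matrix n n ℂ) (hρ : IsState ρ) (ε ε' : ℝ) (hε : 0 ≤ ε) (μ : ℝ) (hμ : 0 < μ)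
    (m : ℕ) (hm : 1 ≤ m) :
    ∃ ν : Matrix n n ℂ, IsState ν ∧ sineDist ρ ν ≤ ε ∧
      dMaxSmooth (ε + ε') (tpowMat (E ρ) m) (tpowMat (F σ) m) ≤
        dMaxSmooth ε' (tpowMat (E ν) m) (tpowMat (F ν) m) +
          ((m : ℝ) : EReal) * dMaxSmooth (ε / m) ρ σ + (μ : EReal) := by
  have hm0 : (0 : ℝ) < m := by exact_mod_cast hm
  rcases eq_or_ne (dMaxSmooth (ε / m) ρ σ) ⊤ with htop | htop
  · refine ⟨ρ, hρ, (sineDist_self hρ).trans_le hε, ?_⟩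
    rw [htop, EReal.coe_mul_top_of_pos hm0, EReal.add_top_of_ne_bot (dMaxSmooth_ne_bot _ _ _),
      EReal.top_add_coe]
    exact le_top
  · lift dMaxSmooth (ε / m) ρ σ to ℝ using ⟨htop, dMaxSmooth_ne_bot _ _ _⟩ with r hr
    obtain ⟨ν, hν, hρν, lam, hlam, hle⟩ : ∃ ν, IsState ν ∧ sineDist ρ ν ≤ ε / m ∧
        ∃ lam : ℝ, (lam : EReal) < ((r + μ / m : ℝ) : EReal) ∧
          loewnerLE ν ((((2 : ℝ) ^ lam : ℝ) : ℂ) • σ) := by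
      apply exists_isState_loewnerLE_of_dMaxSmooth_lt
      rw [← hr, EReal.coe_lt_coe_iff]
      exact lt_add_of_pos_right r (div_pos hμ hm0)
    refine ⟨ν, hν, hρν.trans (div_le_self hε (by exact_mod_cast hm)), ?_⟩
    have hmlam : m * lam ≤ m * r + μ := by
      rw [EReal.coe_lt_coe_iff] at hlam
      calc m * lam ≤ m * (r + μ / m) := by gcongr
        _ = m * r + μ := by field_simp
    rw [le_div_iff₀' hm0] at hρν
    calc _ ≤ dMaxSmooth ε' (tpowMat (E ν) m) (tpowMat (F ν) m) + ((m * lam : ℝ) : EReal) :=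
          dMaxSmooth_tpowMat_map_le hE htr hF hρ hν hle m hρν ε'
      _ ≤ dMaxSmooth ε' (tpowMat (E ν) m) (tpowMat (F ν) m) + ((m * r + μ : ℝ) : EReal) := by
          gcongr
      _ = _ := by rw [EReal.coe_add, EReal.coe_mul, add_assoc]

/-- One-shot chain-rule-type bound for the smoothed max-relative entropy. -/
theorem dMaxSmooth_oneshot_chain {d d' : ℕ}
    (E F : Matrix (Fin d) (Fin d) ℂ →ₗ[ℂ] Matrix (Fin d') (Fin d') ℂ)
    (hE : IsQChannel E) (hF : IsQChannel F)
    (ρ σ : Matrix (Fin d) (Fin d) ℂ) (hρ : IsState ρ) (hσ : IsState σ)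
    (ε ε' : ℝ) (hε : 0 < ε ∧ ε < 1) (hε' : 0 < ε' ∧ ε' < 1) (hεε' : ε + ε' < 1)
    (μ : ℝ) (hμ : 0 < μ) (m : ℕ) (hm : 1 ≤ m) :
    ∃ ν : Matrix (Fin d) (Fin d) ℂ, IsState ν ∧ sineDist ρ ν ≤ ε ∧
      dMaxSmooth (ε + ε') (tpowMat (E ρ) m) (tpowMat (F σ) m) ≤
        dMaxSmooth ε' (tpowMat (E ν) m) (tpowMat (F ν) m) +
          (((m : ℝ)) : EReal) * dMaxSmooth (ε / m) ρ σ + ((μ : ℝ) : EReal) :=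
  dMaxSmooth_oneshot_chain_general E F hE.isTwoPositive hE.1
    (fun _ => hF.isTwoPositive.posSemidef) ρ σ hρ ε ε' hε.1.le μ hμ m hm

end QCD
end
end

section
/- Separation of Rényi divergence and relative entropy finiteness (classical example): Define, for integers n ≥ 1, p_n := 2^{−n}·n^{−2} and r_n := 2^{−n}·n^{−2}·2^{−2^n}. Then (i) for every real α > 1 the series Σ_{n≥1} r_n·(p_n/r_n)^α = Σ_{n≥1} 2^{(α−1)·2^n − n}·n^{−2} diverges (is not summable), so the classical α-Rényi divergence of p relative to r is infinite for every α > 1; and (ii) the series Σ_{n≥1} p_n·log(p_n/r_n) = Σ_{n≥1} n^{−2} converges, so the classical relative entropy of p relative to r is finite. -/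
/-! Since `p n / r n = 2 ^ 2 ^ n`, its logarithm `2 ^ n` exactly cancels the factor `2 ^ (-n)` of
`p n` and leaves `n ^ (-2)`. A power `α > 1` of the ratio instead leaves the doubly exponential
factor `2 ^ ((α - 1) * 2 ^ n)`, which dominates `1 / p n`, so that the terms of the Rényi series
tend to infinity. -/

namespace ClassicalExample

/-- `p n = 2^{-n} n^{-2}`. -/
noncomputable def p (n : ℕ) : ℝ := 2 ^ (-(n : ℝ)) * (n : ℝ) ^ (-(2 : ℝ))

/-- `r n = 2^{-n} n^{-2} 2^{-2^n}`. -/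
noncomputable def r (n : ℕ) : ℝ :=
  2 ^ (-(n : ℝ)) * (n : ℝ) ^ (-(2 : ℝ)) * 2 ^ (-((2 : ℝ) ^ (n : ℝ)))

open Filter Real

section WeightedTerms

variable {w b : ℝ}

theorem div_mul_rpow_neg (hw : w ≠ 0) (hb : 0 ≤ b) (x : ℝ) : w / (w * b ^ (-x)) = b ^ x := by
  rw [div_mul_cancel_left₀ hw, rpow_neg hb, inv_inv]

theorem mul_rpow_neg_mul_div_rpow (hw : w ≠ 0) (hb : 0 < b) (x α : ℝ) :
    w * b ^ (-x) * (w / (w * b ^ (-x))) ^ α = w * b ^ ((α - 1) * x) := by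
  rw [div_mul_rpow_neg hw hb.le, ← rpow_mul hb.le, mul_assoc, ← rpow_add hb]
  ring_nf

theorem mul_logb_div_mul_rpow_neg (hw : w ≠ 0) (hb : 0 < b) (hb' : b ≠ 1) (x : ℝ) :
    w * logb b (w / (w * b ^ (-x))) = w * x := by
  rw [div_mul_rpow_neg hw hb.le, logb_rpow hb hb']

end WeightedTerms

section DoublyExponentialGrowth

variable {b c : ℝ}

theorem tendsto_rpow_mul_mul_rpow_atTop (hb : 1 < b) (hc : 0 < c) (s : ℝ) :
    Tendsto (fun x : ℝ ↦ b ^ (c * x) * x ^ s) atTop atTop := by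
  refine (tendsto_exp_mul_div_rpow_atTop (-s) (log b * c) (mul_pos (log_pos hb) hc)).congr' ?_
  filter_upwards [eventually_ge_atTop 0] with x hx
  rw [rpow_neg hx, div_inv_eq_mul, rpow_def_of_pos (zero_lt_one.trans hb), mul_assoc]

theorem tendsto_rpow_mul_rpow_sub_mul_rpow_atTop (hb : 1 < b) (hc : 0 < c) (s : ℝ) :
    Tendsto (fun x : ℝ ↦ b ^ (c * b ^ x - x) * x ^ s) atTop atTop := by
  -- With `y = b ^ x`, the function is the product of `b ^ (c * y) * y ^ (-2)` and `b ^ x * x ^ s`.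
  have hb₀ : 0 < b := zero_lt_one.trans hb
  have double_exp : Tendsto (fun x : ℝ ↦ b ^ (c * b ^ x) * (b ^ x) ^ (-2 : ℝ)) atTop atTop :=
    (tendsto_rpow_mul_mul_rpow_atTop hb hc (-2)).comp (tendsto_rpow_atTop_of_base_gt_one b hb)
  have single_exp : Tendsto (fun x : ℝ ↦ b ^ (1 * x) * x ^ s) atTop atTop :=
    tendsto_rpow_mul_mul_rpow_atTop hb one_pos s
  refine (double_exp.atTop_mul_atTop₀ single_exp).congr fun x ↦ ?_
  rw [← mul_assoc, ← rpow_mul hb₀.le, ← rpow_add hb₀, ← rpow_add hb₀]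
  ring_nf

end DoublyExponentialGrowth

theorem not_summable_of_tendsto_cofinite_atTop {ι : Type*} [Infinite ι] {f : ι → ℝ}
    (hf : Tendsto f cofinite atTop) : ¬ Summable f :=
  fun hs ↦ not_tendsto_nhds_of_tendsto_atTop hf 0 hs.tendsto_cofinite_zero

theorem not_summable_subtype_of_tendsto_atTop {f : ℕ → ℝ} (hf : Tendsto f atTop atTop)
    {s : Set ℕ} (hs : s.Infinite) : ¬ Summable (fun n : s ↦ f n) :=
  have := hs.to_subtype
  not_summable_of_tendsto_cofinite_atTop <|
    (Nat.cofinite_eq_atTop ▸ hf).comp Subtype.val_injective.tendsto_cofinite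

theorem p_pos {n : ℕ} (hn : 1 ≤ n) : 0 < p n := by
  have : (0 : ℝ) < n := Nat.cast_pos.2 hn
  unfold p
  positivity

theorem r_eq_p_mul (n : ℕ) : r n = p n * 2 ^ (-(2 : ℝ) ^ (n : ℝ)) := rfl

theorem r_mul_div_rpow (α : ℝ) {n : ℕ} (hn : 1 ≤ n) :
    r n * (p n / r n) ^ α = 2 ^ ((α - 1) * 2 ^ (n : ℝ) - (n : ℝ)) * (n : ℝ) ^ (-(2 : ℝ)) := by
  rw [r_eq_p_mul, mul_rpow_neg_mul_div_rpow (p_pos hn).ne' two_pos, p, mul_right_comm,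
    ← rpow_add two_pos, neg_add_eq_sub]

theorem p_mul_logb_div {n : ℕ} (hn : 1 ≤ n) :
    p n * logb 2 (p n / r n) = (n : ℝ) ^ (-(2 : ℝ)) := by
  rw [r_eq_p_mul, mul_logb_div_mul_rpow_neg (p_pos hn).ne' two_pos (by norm_num), p,
    mul_right_comm, ← rpow_add two_pos, neg_add_cancel, rpow_zero, one_mul]

theorem not_summable_r_mul_div_rpow {α : ℝ} (hα : 1 < α) :
    ¬ Summable (fun k : {n : ℕ // 1 ≤ n} ↦ r k.1 * (p k.1 / r k.1) ^ α) := by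
  refine not_summable_subtype_of_tendsto_atTop (f := fun n ↦ r n * (p n / r n) ^ α) ?_
    (Set.Ici_infinite 1)
  refine ((tendsto_rpow_mul_rpow_sub_mul_rpow_atTop one_lt_two (sub_pos.2 hα) (-2)).comp
    tendsto_natCast_atTop_atTop).congr' ?_
  filter_upwards [eventually_ge_atTop 1] with n hn
  exact (r_mul_div_rpow α hn).symm

theorem summable_p_mul_logb_div :
    Summable (fun k : {n : ℕ // 1 ≤ n} ↦ p k.1 * logb 2 (p k.1 / r k.1)) := by
  have inv_sq : Summable (fun n : ℕ ↦ (n : ℝ) ^ (-(2 : ℝ))) := summable_nat_rpow.2 (by norm_num)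
  exact (inv_sq.comp_injective Subtype.val_injective).congr fun k ↦ (p_mul_logb_div k.2).symm

/-- for every `α > 1` the series `Σ r n (p n / r n)^α =
Σ 2^{(α-1) 2^n - n} n^{-2}` diverges (so `D_α(p‖r) = ∞` for every `α > 1`),
while the series `Σ p n log₂(p n / r n) = Σ n^{-2}` converges
(so `D(p‖r) < ∞`). -/
theorem separation_renyi_relent :
    (∀ α : ℝ, 1 < α →
      (∀ n : ℕ, 1 ≤ n →
        r n * (p n / r n) ^ α = 2 ^ ((α - 1) * 2 ^ (n : ℝ) - (n : ℝ)) * (n : ℝ) ^ (-(2 : ℝ))) ∧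
      ¬ Summable (fun k : {n : ℕ // 1 ≤ n} => r k.1 * (p k.1 / r k.1) ^ α)) ∧
    ((∀ n : ℕ, 1 ≤ n → p n * Real.logb 2 (p n / r n) = (n : ℝ) ^ (-(2 : ℝ))) ∧
      Summable (fun k : {n : ℕ // 1 ≤ n} => p k.1 * Real.logb 2 (p k.1 / r k.1))) := by
  exact ⟨fun α hα ↦ ⟨fun _ ↦ r_mul_div_rpow α, not_summable_r_mul_div_rpow hα⟩,
    fun _ ↦ p_mul_logb_div, summable_p_mul_logb_div⟩

end ClassicalExample
end
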